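/- (Strict dominance under independent opponent randomization, RAE₂) Fix a player i and two pure strategies s_i, s_i' ∈ S i, and let τ : S i → S i be the transposition exchanging s_i and s_i'. Suppose that for every tuple T assigning to each pure strategy k ∈ S i a profile T(k) of opposing pure strategies, one has q_i(s_i, T) > q_i(s_i', T ∘ τ). Then for every mixed strategy profile σ, Q_i(s_i, σ) > Q_i(s_i', σ); consequently s_i' never maximizes Q_i(·, σ) over S i, i.e., a strictly dominated pure strategy is never an RAE₂ best response to any mixed strategy profile. -/

import Mathlib

open MeasureTheory

noncomputable section

/-- Insert pure strategy `si` for player `i` into a profile `t` of pure strategies of the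
other players, obtaining a full pure-strategy profile. -/
def insertStrat {ι : Type*} [DecidableEq ι] {S : ι → Type*} (i : ι) (si : S i)
    (t : ∀ j : {j : ι // j ≠ i}, S j.1) : ∀ j, S j :=
  fun j => if h : j = i then h.symm ▸ si else t ⟨j, h⟩

/-- `σ` is a mixed strategy profile: each `σ j` is nonnegative and sums to one. -/
def IsMixedProfile {ι : Type*} {S : ι → Type*} [∀ j, Fintype (S j)]
    (σ : ∀ j, S j → ℝ) : Prop :=
  (∀ j s, 0 ≤ σ j s) ∧ ∀ j, ∑ s, σ j s = 1

/-- In the RAE₂ (independent opponent randomization) framework, `q_i(s_i, T)` is the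
probability that against the tuple `T` — assigning to each pure strategy `k ∈ S i` its own
opposing profile `T k` — the payoff of `s_i` (against `T s_i`) is the largest. -/
def rae2Prob {ι : Type*} [DecidableEq ι] {S : ι → Type*}
    {Ω : Type*} [MeasurableSpace Ω] (μ : Measure Ω)
    (U : ∀ i : ι, (∀ j, S j) → Ω → ℝ) (i : ι) (si : S i)
    (T : S i → ∀ j : {j : ι // j ≠ i}, S j.1) : ℝ :=
  (μ {ω | ∀ k : S i, U i (insertStrat i k (T k)) ω ≤ U i (insertStrat i si (T si)) ω}).toReal

/-- The RAE₂ mixed risk-averse probability `Q_i(s_i, σ)`. -/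
def mixedRae2Prob {ι : Type*} [Fintype ι] [DecidableEq ι] {S : ι → Type*}
    [∀ j, Fintype (S j)] [∀ j, DecidableEq (S j)]
    {Ω : Type*} [MeasurableSpace Ω] (μ : Measure Ω)
    (U : ∀ i : ι, (∀ j, S j) → Ω → ℝ) (i : ι) (si : S i) (σ : ∀ j, S j → ℝ) : ℝ :=
  ∑ T : S i → ∀ j : {j : ι // j ≠ i}, S j.1,
    (∏ k : S i, ∏ j : {j : ι // j ≠ i}, σ j.1 (T k j)) * rae2Prob μ U i si T

/-- The weights a mixed profile puts on the tuples of opposing profiles sum to one. -/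
theorem IsMixedProfile.sum_tuple_weight {ι : Type*} [Fintype ι] [DecidableEq ι]
    {S : ι → Type*} [∀ j, Fintype (S j)] [∀ j, DecidableEq (S j)]
    {σ : ∀ j, S j → ℝ} (hσ : IsMixedProfile σ) (i : ι) :
    ∑ T : S i → ∀ j : {j : ι // j ≠ i}, S j.1,
      ∏ k : S i, ∏ j : {j : ι // j ≠ i}, σ j.1 (T k j) = 1 := by
  have profile_sum :
      ∑ t : ∀ j : {j : ι // j ≠ i}, S j.1, ∏ j : {j : ι // j ≠ i}, σ j.1 (t j) = 1 := by
    rw [← Fintype.prod_sum]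
    exact Finset.prod_eq_one fun j _ => hσ.2 j.1
  rw [← Fintype.prod_sum
    (fun (_ : S i) (t : ∀ j : {j : ι // j ≠ i}, S j.1) => ∏ j, σ j.1 (t j))]
  exact Finset.prod_eq_one fun _ _ => profile_sum

/-- Permuting the tuple of opposing profiles leaves its weight unchanged, so the sum defining
`Q_i` may be reindexed by a permutation of the pure strategies of player `i`. -/
theorem mixedRae2Prob_eq_sum_comp_perm {ι : Type*} [Fintype ι] [DecidableEq ι]
    {S : ι → Type*} [∀ j, Fintype (S j)] [∀ j, DecidableEq (S j)]
    {Ω : Type*} [MeasurableSpace Ω] (μ : Measure Ω)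
    (U : ∀ i : ι, (∀ j, S j) → Ω → ℝ) (i : ι) (si : S i) (σ : ∀ j, S j → ℝ)
    (e : Equiv.Perm (S i)) :
    mixedRae2Prob μ U i si σ =
      ∑ T : S i → ∀ j : {j : ι // j ≠ i}, S j.1,
        (∏ k : S i, ∏ j : {j : ι // j ≠ i}, σ j.1 (T k j)) *
          rae2Prob μ U i si (fun k => T (e k)) := by
  symm
  refine Fintype.sum_equiv (e.symm.arrowCongr (Equiv.refl _)) _ _ fun T => ?_
  exact congrArg (· * _)
    (Equiv.prod_comp e fun k => ∏ j : {j : ι // j ≠ i}, σ j.1 (T k j)).symm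

/-- **Strict dominance under independent opponent randomization (RAE₂).** If
`q_i(s_i, T) > q_i(s_i', T ∘ τ)` for every tuple `T`, where `τ` is the transposition
exchanging `s_i` and `s_i'`, then `Q_i(s_i, σ) > Q_i(s_i', σ)` for every mixed strategy
profile `σ`; consequently `s_i'` never maximizes `Q_i(·, σ)`. -/
theorem strictly_dominated_not_best_response_rae2
    {ι : Type*} [Fintype ι] [DecidableEq ι] [Nonempty ι]
    {S : ι → Type*} [∀ j, Fintype (S j)] [∀ j, DecidableEq (S j)] [∀ j, Nonempty (S j)]
    {Ω : Type*} [MeasurableSpace Ω] (μ : Measure Ω) [IsProbabilityMeasure μ]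
    (U : ∀ i : ι, (∀ j, S j) → Ω → ℝ)
    (hmeas : ∀ i s, Measurable (U i s))
    (i : ι) (si si' : S i)
    (hdom : ∀ T : S i → ∀ j : {j : ι // j ≠ i}, S j.1,
      rae2Prob μ U i si' (fun k => T (Equiv.swap si si' k)) < rae2Prob μ U i si T) :
    ∀ σ : ∀ j, S j → ℝ, IsMixedProfile σ →
      mixedRae2Prob μ U i si' σ < mixedRae2Prob μ U i si σ ∧
      ¬ (∀ k : S i, mixedRae2Prob μ U i k σ ≤ mixedRae2Prob μ U i si' σ) := by
  intro σ hσ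
  have key : mixedRae2Prob μ U i si' σ < mixedRae2Prob μ U i si σ := by
    rw [mixedRae2Prob_eq_sum_comp_perm μ U i si' σ (Equiv.swap si si'), mixedRae2Prob]
    have weight_nonneg (T : S i → ∀ j : {j : ι // j ≠ i}, S j.1) :
        0 ≤ ∏ k : S i, ∏ j : {j : ι // j ≠ i}, σ j.1 (T k j) :=
      Finset.prod_nonneg fun k _ => Finset.prod_nonneg fun j _ => hσ.1 j.1 (T k j)
    obtain ⟨T, -, hT⟩ := Finset.exists_ne_zero_of_sum_ne_zero
      ((hσ.sum_tuple_weight i).trans_ne one_ne_zero)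
    exact Finset.sum_lt_sum
      (fun T _ => mul_le_mul_of_nonneg_left (hdom T).le (weight_nonneg T))
      ⟨T, Finset.mem_univ T,
        mul_lt_mul_of_pos_left (hdom T) ((weight_nonneg T).lt_of_ne' hT)⟩
  exact ⟨key, fun h => (h si).not_gt key⟩
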